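/- arXiv:1709.00900 — 3 statements merged into one kernel-verified Lean document; each statement's English description precedes it below -/
import Mathlib

section
/- Let L be a type with decidable equality, let D be a finite multiset of finsets of L (an itemset database), and let I be a finset of L. Then the number of transactions t ∈ D (with multiplicity) with I ⊆ t equals the number of transactions t ∈ D with Star(I) ≤ Star(t), where ≤ is edge-wise containment of simple graphs on Option L. In other words, the support of the itemset I in D equals the support of the star graph Star(I) in the database {Star(t) : t ∈ D}. -/
open scoped Classical in
/-- The support of a pattern `p` in a database `D`: the number of transactions
`t ∈ D` (with multiplicity) such that `p ⊑ t`. -/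
noncomputable def supp {α : Type*} [PartialOrder α] (p : α) (D : Multiset α) : ℕ :=
  Multiset.countP (fun t => p ≤ t) D

/-- The star graph of a finset `I`: the simple graph on `Option L` in which
`none` (the root `r`) is adjacent to `some i` exactly when `i ∈ I`, and there
are no other adjacencies. -/
def StarGraph {L : Type*} (I : Finset L) : SimpleGraph (Option L) :=
  SimpleGraph.fromRel (fun x y => x = none ∧ ∃ i ∈ I, y = some i)

theorem supp_map {α β : Type*} [PartialOrder α] [PartialOrder β] (f : α ↪o β) (p : α)
    (D : Multiset α) : supp (f p) (D.map f) = supp p D := by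
  classical
  rw [supp, Multiset.countP_map, ← Multiset.countP_eq_card_filter]
  exact Multiset.countP_congr rfl fun _ _ => propext f.le_iff_le

section StarGraph

variable {L : Type*} {I J : Finset L}

@[simp]
theorem starGraph_adj_none_some {i : L} : (StarGraph I).Adj none (some i) ↔ i ∈ I := by
  simp [StarGraph]

theorem starGraph_le_iff {G : SimpleGraph (Option L)} :
    StarGraph I ≤ G ↔ ∀ i ∈ I, G.Adj none (some i) := by
  constructor
  · exact fun h i hi => h (starGraph_adj_none_some.mpr hi)
  · rintro h x y ⟨-, ⟨rfl, i, hi, rfl⟩ | ⟨rfl, i, hi, rfl⟩⟩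
    · exact h i hi
    · exact (h i hi).symm

theorem starGraph_le_starGraph_iff : StarGraph I ≤ StarGraph J ↔ I ≤ J := by
  simp only [starGraph_le_iff, starGraph_adj_none_some, Finset.subset_iff]

end StarGraph

/-- The support of the itemset `I` in the database `D` (the number of
transactions `t ∈ D` with `I ⊆ t`, counted with multiplicity) equals the
support of the star graph `StarGraph I` in the database
`{StarGraph t : t ∈ D}`, where graphs are ordered edge-wise. -/
theorem stmt5 {L : Type*} [DecidableEq L] (D : Multiset (Finset L)) (I : Finset L) :
    supp I D = supp (StarGraph I) (D.map StarGraph) :=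
  (supp_map (OrderEmbedding.ofMapLEIff StarGraph fun _ _ => starGraph_le_starGraph_iff) I D).symm
end

section
/- Reduction from maximal frequent itemset mining to maximal frequent subsequence mining: Let L be a linearly ordered type with decidable equality, let D be a finite multiset of finsets of L, and let τ ≥ 1. Consider the sequence-mining problem whose patterns are the duplicate-free lists over L ordered by the sublist (subsequence) relation, with database {sort(t) : t ∈ D}, where sort(t) is the increasingly sorted list of the elements of t. Then: (a) a finset I is a maximal τ-frequent itemset of D (patterns are all finsets of L ordered by ⊆) if and only if sort(I) is a maximal τ-frequent duplicate-free list of the mapped database; and (b) every maximal τ-frequent duplicate-free list of the mapped database equals sort(I) for some finset I of L. -/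
/-!
Sorting embeds finsets under inclusion into lists under the sublist relation, and its range is a
lower set: a sublist of a sorted list is sorted. Such an embedding preserves supports, and a list
outside its range lies below no transaction of the mapped database, so its support is zero. Hence
for `τ ≥ 1` all frequent lists, in particular all those competing with a given one for maximality,
are sorted.
-/

open scoped Classical in
/-- The support of a pattern `p` in a database `D` with respect to the
containment relation `r`: the number of transactions `t ∈ D` (with
multiplicity) such that `r p t`. -/
noncomputable def suppR {α : Type*} (r : α → α → Prop) (p : α) (D : Multiset α) : ℕ :=
  Multiset.countP (fun t => r p t) D

/-- The set of maximal `τ`-frequent patterns of the database `D` with pattern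
set `P`, with respect to the (partial order) containment relation `r`:
patterns `p ∈ P` that are `τ`-frequent and such that no strictly larger
pattern `q ∈ P` is `τ`-frequent. -/
def MaxFreqR {α : Type*} (r : α → α → Prop) (P : Set α) (D : Multiset α) (τ : ℕ) : Set α :=
  {p | p ∈ P ∧ τ ≤ suppR r p D ∧ ∀ q ∈ P, r p q → p ≠ q → suppR r q D < τ}

section InitialSeg

open scoped InitialSeg

variable {α β : Type*} {r : α → α → Prop} {s : β → β → Prop} {τ : ℕ}

theorem suppR_map {f : α → β} (hf : ∀ a b, s (f a) (f b) ↔ r a b) (a : α) (D : Multiset α) :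
    suppR s (f a) (D.map f) = suppR r a D := by
  classical
  simp only [suppR, Multiset.countP_map, hf, ← Multiset.countP_eq_card_filter]

theorem mem_range_of_suppR_map_pos (f : r ≼i s) {b : β} {D : Multiset α}
    (hb : 0 < suppR s b (D.map f)) : b ∈ Set.range f := by
  classical
  obtain ⟨_, ht, hbt⟩ := Multiset.countP_pos.1 hb
  obtain ⟨a, -, rfl⟩ := Multiset.mem_map.1 ht
  exact f.mem_range_of_rel hbt

theorem maxFreqR_map_subset_range (f : r ≼i s) (Q : Set β) (D : Multiset α) (hτ : 0 < τ) :
    MaxFreqR s Q (D.map f) τ ⊆ Set.range f :=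
  fun _ hb => mem_range_of_suppR_map_pos f (hτ.trans_le hb.2.1)

theorem apply_mem_maxFreqR_map_iff (f : r ≼i s) (Q : Set β) (D : Multiset α) (hτ : 0 < τ)
    (a : α) : f a ∈ MaxFreqR s Q (D.map f) τ ↔ a ∈ MaxFreqR r (f ⁻¹' Q) D τ := by
  have supp_map (c : α) : suppR s (f c) (D.map f) = suppR r c D :=
    suppR_map (fun _ _ => f.map_rel_iff) c D
  constructor
  · rintro ⟨haQ, hfreq, hmax⟩
    refine ⟨haQ, supp_map a ▸ hfreq, fun c hcQ hac hne => ?_⟩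
    exact supp_map c ▸ hmax (f c) hcQ (f.map_rel_iff.2 hac) (f.inj.not.2 hne)
  · rintro ⟨haQ, hfreq, hmax⟩
    refine ⟨haQ, (supp_map a).symm ▸ hfreq, fun b hbQ hab hne => ?_⟩
    by_contra! hb
    obtain ⟨c, rfl⟩ := mem_range_of_suppR_map_pos f (hτ.trans_le hb)
    have hc : suppR r c D < τ := hmax c hbQ (f.map_rel_iff.1 hab) (f.inj.not.1 hne)
    exact hc.not_ge (supp_map c ▸ hb)

end InitialSeg

section FinsetSort

variable {L : Type*} (r : L → L → Prop) [DecidableRel r] [IsTrans L r] [Std.Antisymm r]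
  [Std.Total r]

theorem finsetSort_sublist_finsetSort_iff {I J : Finset L} :
    (I.sort r).Sublist (J.sort r) ↔ I ⊆ J := by
  refine ⟨fun h a ha => (J.mem_sort r).1 (h.subset ((I.mem_sort r).2 ha)), fun h => ?_⟩
  have hsub : I.sort r ⊆ J.sort r := fun a ha => (J.mem_sort r).2 (h ((I.mem_sort r).1 ha))
  exact List.sublist_of_subperm_of_pairwise (List.subperm_of_subset (I.sort_nodup r) hsub)
    (I.pairwise_sort r) (J.pairwise_sort r)

theorem finsetSort_injective : Function.Injective fun I : Finset L => I.sort r := by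
  classical
  exact Function.LeftInverse.injective fun I => I.sort_toFinset r

theorem exists_finsetSort_eq_of_sublist {S : List L} {J : Finset L} (h : S.Sublist (J.sort r)) :
    ∃ I : Finset L, I.sort r = S := by
  classical
  exact ⟨S.toFinset,
    (List.toFinset_sort r (h.nodup (J.sort_nodup r))).2 ((J.pairwise_sort r).sublist h)⟩

open scoped InitialSeg in
/-- Sorting, as an initial segment embedding of the itemsets ordered by inclusion into the lists
ordered by the subsequence relation. It carries the reduction between the two mining problems.
Both relations are reflexive, unlike the strict orders to which `InitialSeg` is usually applied. -/
def finsetSortInitialSeg : ((· ⊆ ·) : Finset L → Finset L → Prop) ≼i (List.Sublist (α := L)) where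
  toFun I := I.sort r
  inj' := finsetSort_injective r
  map_rel_iff' := finsetSort_sublist_finsetSort_iff r
  mem_range_of_rel' _ _ := exists_finsetSort_eq_of_sublist r

end FinsetSort

/-- Reduction from maximal frequent itemset mining to maximal frequent
subsequence mining: for `τ ≥ 1`, a finset `I` is a maximal `τ`-frequent
itemset of `D` iff its increasingly sorted list is a maximal `τ`-frequent
duplicate-free list (w.r.t. the sublist relation) of the mapped database, and
every maximal `τ`-frequent duplicate-free list of the mapped database is the
sorted list of some finset. -/
theorem stmt8 {L : Type*} [LinearOrder L] [DecidableEq L]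
    (D : Multiset (Finset L)) (τ : ℕ) (hτ : 1 ≤ τ) :
    (∀ I : Finset L,
      I ∈ MaxFreqR (· ⊆ ·) (Set.univ : Set (Finset L)) D τ ↔
      I.sort (· ≤ ·) ∈ MaxFreqR List.Sublist {S : List L | S.Nodup}
        (D.map (fun t => t.sort (· ≤ ·))) τ) ∧
    (∀ S ∈ MaxFreqR List.Sublist {S : List L | S.Nodup}
        (D.map (fun t => t.sort (· ≤ ·))) τ,
      ∃ I : Finset L, I.sort (· ≤ ·) = S) := by
  let f := finsetSortInitialSeg (L := L) (· ≤ ·)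
  let nodupLists := {S : List L | S.Nodup}
  have preimage_nodup : f ⁻¹' nodupLists = Set.univ :=
    Set.eq_univ_of_forall fun I => I.sort_nodup (· ≤ ·)
  refine ⟨fun I => ?_, maxFreqR_map_subset_range f nodupLists D hτ⟩
  rw [← preimage_nodup]
  exact (apply_mem_maxFreqR_map_iff f nodupLists D hτ I).symm
end

section
/- Characterization of the subsequence relation for duplicate-free lists via precedence pairs: Let S and T be duplicate-free lists over a type α with decidable equality. Then S is a sublist (subsequence) of T if and only if both of the following hold: (i) every element of S is an element of T, and (ii) for all a, b ∈ α, if a occurs strictly before b in S (i.e., there are indices i < j with S.get i = a and S.get j = b), then a occurs strictly before b in T. -/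
/-- `a` occurs strictly before `b` in the list `S`: there are indices `i < j`
with `S.get i = a` and `S.get j = b`. -/
def Precedes {α : Type*} (S : List α) (a b : α) : Prop :=
  ∃ i j : Fin S.length, (i : ℕ) < (j : ℕ) ∧ S.get i = a ∧ S.get j = b

section

variable {α : Type*} {S T : List α}

theorem precedes_get_of_lt {i j : Fin S.length} (hij : i < j) :
    Precedes S (S.get i) (S.get j) :=
  ⟨i, j, hij, rfl, rfl⟩

theorem precedes_get_iff_lt (hS : S.Nodup) {i j : Fin S.length} :
    Precedes S (S.get i) (S.get j) ↔ i < j := by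
  refine ⟨?_, precedes_get_of_lt⟩
  rintro ⟨p, q, hpq, hp, hq⟩
  rwa [← hS.injective_get hp, ← hS.injective_get hq]

theorem Precedes.of_sublist {a b : α} (h : Precedes S a b) (hST : S.Sublist T) :
    Precedes T a b := by
  obtain ⟨i, j, hij, rfl, rfl⟩ := h
  obtain ⟨f, hf⟩ := List.sublist_iff_exists_fin_orderEmbedding_get_eq.mp hST
  rw [hf i, hf j]
  exact precedes_get_of_lt (f.lt_iff_lt.mpr hij)

theorem sublist_of_subset_of_precedes (hT : T.Nodup) (hsub : S ⊆ T)
    (hprec : ∀ a b, Precedes S a b → Precedes T a b) : S.Sublist T := by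
  have exists_position (i : Fin S.length) : ∃ k, T.get k = S.get i :=
    List.mem_iff_get.mp (hsub (S.get_mem i))
  choose position get_position using exists_position
  have position_strictMono : StrictMono position := fun i j hij ↦ by
    rw [← precedes_get_iff_lt hT, get_position, get_position]
    exact hprec _ _ (precedes_get_of_lt hij)
  exact List.sublist_iff_exists_fin_orderEmbedding_get_eq.mpr
    ⟨.ofStrictMono position position_strictMono, fun i ↦ (get_position i).symm⟩

theorem stmt15_general (hT : T.Nodup) :
    S.Sublist T ↔ (∀ a ∈ S, a ∈ T) ∧ ∀ a b : α, Precedes S a b → Precedes T a b :=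
  ⟨fun hST ↦ ⟨fun _ ha ↦ hST.subset ha, fun _ _ h ↦ h.of_sublist hST⟩,
    fun ⟨hsub, hprec⟩ ↦ sublist_of_subset_of_precedes hT hsub hprec⟩

end

/-- Characterization of the subsequence relation for duplicate-free lists via
precedence pairs: `S` is a sublist of `T` iff every element of `S` is an
element of `T` and every precedence pair of `S` is a precedence pair of `T`. -/
theorem stmt15 {α : Type*} [DecidableEq α] (S T : List α)
    (hS : S.Nodup) (hT : T.Nodup) :
    S.Sublist T ↔
      ((∀ a ∈ S, a ∈ T) ∧ ∀ a b : α, Precedes S a b → Precedes T a b) :=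
  stmt15_general hT
end
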